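/- Under the setting of the PIPG iteration (P symmetric positive semidefinite, D nonempty closed convex, K nonempty closed convex cone, step size α satisfying 0 < α ≤ (8 − 4/γ)/(√(λ² + 16ν²) + λ) for some γ ∈ (1/2, 1), λ ≥ ‖P‖, ν ≥ ‖H‖), let w̄ = lim_{j→∞}(w^j − w^{j−1}) be the limit of consecutive differences of the dual PIPG iterates. If ‖w̄‖ > 0, then inf_{z∈D} ⟨H z − g, w̄⟩ > 0 and sup_{y∈K} ⟨y, w̄⟩ = 0; in particular, the hyperplane {y | ⟨w̄, y⟩ = 0} separates the cone K from the set {H z − g | z ∈ D}, so there is no z ∈ D with H z − g ∈ K. -/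

import Mathlib

open scoped RealInnerProductSpace
open Filter Topology Metric ContinuousLinearMap

/-- Projection onto a set: the unique nearest point, when it exists
(it exists and is unique for nonempty closed convex sets in Euclidean space). -/
noncomputable def proj {E : Type*} [NormedAddCommGroup E] [InnerProductSpace ℝ E]
    (S : Set E) (x : E) : E :=
  open Classical in
  if h : ∃ y, y ∈ S ∧ ∀ z ∈ S, ‖x - y‖ ≤ ‖x - z‖ then h.choose else 0

/-- The polar cone `K° = {w | ⟪w, y⟫ ≤ 0 for all y ∈ K}`. -/
def polarCone {E : Type*} [NormedAddCommGroup E] [InnerProductSpace ℝ E]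
    (K : Set E) : Set E := {w | ∀ y ∈ K, ⟪w, y⟫ ≤ 0}

/-- The recession cone `rec D = {y | y + z ∈ D for all z ∈ D}`. -/
def recCone {E : Type*} [NormedAddCommGroup E] (D : Set E) : Set E :=
  {y | ∀ z ∈ D, y + z ∈ D}

/-- The normal cone of `D` at `z`: `N_D(z) = {y | ⟪y, z' - z⟫ ≤ 0 for all z' ∈ D}`. -/
def normalCone {E : Type*} [NormedAddCommGroup E] [InnerProductSpace ℝ E]
    (D : Set E) (z : E) : Set E := {y | ∀ z' ∈ D, ⟪y, z' - z⟫ ≤ 0}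


lemma abs_cauchy (E : Type*) [NormedAddCommGroup E] [InnerProductSpace ℝ E] (x : ℕ → E) (c : ℝ) (hc : 0 < c)
    (h : ∀ i j, ‖x (i+1) - x (j+1)‖^2 + c * ‖(x (i+1) - x i) - (x (j+1) - x j)‖^2 ≤ ‖x i - x j‖^2) :
    CauchySeq (fun i => x (i+1) - x i) := by
  have h1 : ∀ i j, ‖x (i+1) - x (j+1)‖ ≤ ‖x i - x j‖ := by
    intro i j
    refine le_of_sq_le_sq ?_ (norm_nonneg _)
    have := h i j
    have : 0 ≤ c * ‖(x (i+1) - x i) - (x (j+1) - x j)‖^2 := by positivity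
    linarith
  have h2 : ∀ i j k, ‖x (i+k) - x (j+k)‖ ≤ ‖x i - x j‖ := by
    intro i j k
    induction k with
    | zero => simp
    | succ k ih => exact (h1 (i+k) (j+k)).trans ih
  set d : ℕ → E := fun i => x (i+1) - x i with hd
  have hanti : Antitone (fun i => ‖d i‖) := by
    apply antitone_nat_of_succ_le
    intro i
    exact h1 (i+1) i
  obtain ⟨r, hr⟩ : ∃ r, Tendsto (fun i => ‖d i‖) atTop (𝓝 r) :=
    ⟨_, tendsto_atTop_ciInf hanti ⟨0, by rintro _ ⟨i, rfl⟩; exact norm_nonneg _⟩⟩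
  have hr0 : 0 ≤ r := ge_of_tendsto' hr (fun i => norm_nonneg _)
  have hrle : ∀ i, r ≤ ‖d i‖ := fun i => hanti.le_of_tendsto hr i
  have hdd : Tendsto (fun i => d (i+1) - d i) atTop (𝓝 0) := by
    rw [tendsto_zero_iff_norm_tendsto_zero]
    have e1 : Tendsto (fun i => (‖d i‖^2 - ‖d (i+1)‖^2)/c) atTop (𝓝 0) := by
      have := ((hr.pow 2).sub (((tendsto_add_atTop_iff_nat 1).2 hr).pow 2)).div_const c
      simpa using this
    have e2 : Tendsto (fun i => ‖d (i+1) - d i‖^2) atTop (𝓝 0) := by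
      refine squeeze_zero (fun i => by positivity) (fun i => ?_) e1
      rw [le_div_iff₀ hc]
      have := h (i+1) i
      simp only [hd]
      linarith
    have := e2.sqrt
    simpa [Real.sqrt_sq (norm_nonneg _)] using this
  have hL : ∀ L : ℕ, Tendsto (fun i => x (i+L) - x i - (L:ℝ) • d i) atTop (𝓝 0) := by
    have hk : ∀ L : ℕ, Tendsto (fun i => d (i+L) - d i) atTop (𝓝 0) := by
      intro L
      induction L with
      | zero => simp
      | succ L ih =>
        have := ((tendsto_add_atTop_iff_nat L).2 hdd).add ih
        simp only [add_zero] at this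
        refine this.congr (fun i => ?_)
        rw [show i + (L+1) = i + L + 1 by ring]; abel
    intro L
    induction L with
    | zero => simp
    | succ L ih =>
      have := ih.add (hk L)
      simp only [add_zero] at this
      refine this.congr (fun i => ?_)
      rw [show i + (L+1) = i + L + 1 by ring]
      have : d (i+L) = x (i+L+1) - x (i+L) := rfl
      rw [this]
      push_cast
      module
  have hgrow : ∀ j L : ℕ, L * r ≤ ‖x (j+L) - x j‖ := by
    intro j L
    have e1 : Tendsto (fun i => ‖x (i+L) - x i‖) atTop (𝓝 (L*r)) := by
      have a1 : Tendsto (fun i => ‖(L:ℝ) • d i‖) atTop (𝓝 (L*r)) := by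
        simp only [norm_smul, Real.norm_natCast]
        exact hr.const_mul _
      have a2 : Tendsto (fun i => ‖x (i+L) - x i‖ - ‖(L:ℝ) • d i‖) atTop (𝓝 0) := by
        refine squeeze_zero_norm (fun i => ?_) (tendsto_zero_iff_norm_tendsto_zero.1 (hL L))
        exact abs_norm_sub_norm_le _ _
      simpa using a2.add a1
    refine le_of_tendsto e1 ?_
    filter_upwards [eventually_ge_atTop j] with i hi
    obtain ⟨k, rfl⟩ := Nat.exists_eq_add_of_le hi
    have := h2 (j+L) j k
    rwa [show j + L + k = j + k + L by ring] at this
  -- key inequality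
  have key1 : ∀ j L : ℕ, (L*r)^2 ≤ 2 * ⟪d j, ∑ l ∈ Finset.range L, (x (j+l+1) - x j)⟫ := by
    intro j L
    have : ∀ L : ℕ, ‖x (j+L) - x j‖^2 ≤ 2 * ⟪d j, ∑ l ∈ Finset.range L, (x (j+l+1) - x j)⟫ := by
      intro L
      induction L with
      | zero => simp
      | succ L ih =>
        rw [Finset.sum_range_succ, inner_add_right]
        have e1 := h1 (j+L) j
        have e2 : ‖x (j+L+1) - x (j+1)‖^2 ≤ ‖x (j+L) - x j‖^2 := by gcongr
        have e3 : x (j+L+1) - x (j+1) = (x (j+L+1) - x j) - d j := by simp [hd]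
        rw [e3, norm_sub_sq_real, real_inner_comm] at e2
        rw [← add_assoc]
        nlinarith [sq_nonneg ‖d j‖]
    refine le_trans ?_ (this L)
    have := hgrow j L
    gcongr
  have key2 : ∀ m j L : ℕ, (L*r)^2 ≤ 2 * ⟪d (m+j), ∑ l ∈ Finset.range L, (x (m+l+1) - x m)⟫
      + L * (4 * ‖d (m+j)‖ * ‖x (m+j) - x m‖) := by
    intro m j L
    have e := key1 (m+j) L
    have e2 : ‖∑ l ∈ Finset.range L, (x (m+j+l+1) - x (m+j)) - ∑ l ∈ Finset.range L, (x (m+l+1) - x m)‖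
        ≤ L * (2 * ‖x (m+j) - x m‖) := by
      rw [← Finset.sum_sub_distrib]
      refine (norm_sum_le_of_le _ (f := fun l => _) (n := fun _ => 2 * ‖x (m+j) - x m‖) ?_).trans ?_
      · intro l _
        have := h2 (m+j) m (l+1)
        calc _ = ‖(x (m+j+(l+1)) - x (m+(l+1))) - (x (m+j) - x m)‖ := by
              congr 1; simp only [← add_assoc]; abel
          _ ≤ _ := norm_sub_le _ _
          _ ≤ _ := by linarith
      · simp
    have e3 := real_inner_le_norm (d (m+j)) (∑ l ∈ Finset.range L, (x (m+j+l+1) - x (m+j)) - ∑ l ∈ Finset.range L, (x (m+l+1) - x m))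
    rw [inner_sub_right] at e3
    have e4 := mul_le_mul_of_nonneg_left e2 (norm_nonneg (d (m+j)))
    linarith
  have hY : ∀ m L : ℕ, 2 * ‖∑ l ∈ Finset.range L, (x (m+l+1) - x m)‖ ≤ L * (L+1) * ‖d m‖ := by
    intro m L
    have hx : ∀ l : ℕ, ‖x (m+l) - x m‖ ≤ l * ‖d m‖ := by
      intro l
      induction l with
      | zero => simp
      | succ l ih =>
        have e : x (m+(l+1)) - x m = d (m+l) + (x (m+l) - x m) := by
          simp only [hd, ← add_assoc]; abel
        rw [e]
        refine (norm_add_le _ _).trans ?_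
        have := hanti (Nat.le_add_right m l)
        simp only at this
        push_cast; linarith
    induction L with
    | zero => simp
    | succ L ih =>
      rw [Finset.sum_range_succ]
      have := norm_add_le (∑ l ∈ Finset.range L, (x (m+l+1) - x m)) (x (m+L+1) - x m)
      have h3 := hx (L+1)
      rw [← add_assoc] at h3
      push_cast at h3 ⊢
      nlinarith
  have key3 : ∀ m i j : ℕ, 2 * r^2 ≤ ‖d (m+i) + d (m+j)‖ * ‖d m‖ := by
    intro m i j
    by_contra! hcon
    set A := ‖d (m+i) + d (m+j)‖ * ‖d m‖
    set C := 4 * ‖d (m+i)‖ * ‖x (m+i) - x m‖ + 4 * ‖d (m+j)‖ * ‖x (m+j) - x m‖ with hC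
    obtain ⟨L, hLL⟩ := exists_nat_gt ((A + C) / (2*r^2 - A))
    rw [div_lt_iff₀ (by linarith)] at hLL
    have hLpos : 0 < (L:ℝ) := by
      have : 0 ≤ A + C := by positivity
      by_contra! hh
      nlinarith
    have a1 := key2 m i L
    have a2 := key2 m j L
    have a3 := real_inner_le_norm (d (m+i) + d (m+j)) (∑ l ∈ Finset.range L, (x (m+l+1) - x m))
    rw [inner_add_left] at a3
    have a4 := mul_le_mul_of_nonneg_left (hY m L) (norm_nonneg (d (m+i) + d (m+j)))
    have a5 : 2 * (L*r)^2 ≤ L*(L+1)*A + L*C := by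
      simp only [A, hC]; nlinarith
    have a6 : L * (2*r^2*L) ≤ L * ((L+1)*A + C) := by nlinarith
    have a7 := le_of_mul_le_mul_left a6 hLpos
    nlinarith
  have hb : Tendsto (fun m => √(4 * ‖d m‖^2 - 4 * (r^4 / ‖d m‖^2))) atTop (𝓝 0) := by
    have e1 : Tendsto (fun m => 4 * ‖d m‖^2 - 4 * (r^4 / ‖d m‖^2)) atTop (𝓝 0) := by
      rcases hr0.eq_or_lt with h0 | h0
      · subst h0
        simpa using (hr.pow 2).const_mul 4
      · have := ((hr.pow 2).const_mul 4).sub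
          ((Tendsto.div (tendsto_const_nhds (x := r^4)) (hr.pow 2) (by positivity)).const_mul 4)
        have e : 4 * r^2 - 4 * (r^4 / r^2) = 0 := by field_simp; ring
        rwa [e] at this
    simpa using e1.sqrt
  refine cauchySeq_of_le_tendsto_0 _ (fun i j m hi hj => ?_) hb
  obtain ⟨i, rfl⟩ := Nat.exists_eq_add_of_le hi
  obtain ⟨j, rfl⟩ := Nat.exists_eq_add_of_le hj
  rw [dist_eq_norm]
  apply Real.le_sqrt_of_sq_le
  have p := parallelogram_law_with_norm ℝ (d (m+i)) (d (m+j))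
  have b1 : ‖d (m+i)‖ ≤ ‖d m‖ := hanti hi
  have b2 : ‖d (m+j)‖ ≤ ‖d m‖ := hanti hj
  have k := key3 m i j
  have c1 : ‖d (m+i)‖^2 ≤ ‖d m‖^2 := by gcongr
  have c2 : ‖d (m+j)‖^2 ≤ ‖d m‖^2 := by gcongr
  have c3 : 4 * (r^4 / ‖d m‖^2) ≤ ‖d (m+i) + d (m+j)‖^2 := by
    rcases (norm_nonneg (d m)).eq_or_lt with h0 | h0
    · rw [← h0]; simp
    · rw [← mul_div_assoc, div_le_iff₀ (by positivity)]
      have : (2*r^2)^2 ≤ (‖d (m+i) + d (m+j)‖ * ‖d m‖)^2 := by gcongr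
      nlinarith
  nlinarith

lemma core_cauchy (E : Type*) [AddCommGroup E] [Module ℝ E] (core : InnerProductSpace.Core ℝ E)
    (x : ℕ → E) (c : ℝ) (hc : 0 < c)
    (h : ∀ i j, core.inner (x (i+1) - x (j+1)) (x (i+1) - x (j+1))
      + c * core.inner ((x (i+1) - x i) - (x (j+1) - x j)) ((x (i+1) - x i) - (x (j+1) - x j))
      ≤ core.inner (x i - x j) (x i - x j)) :
    ∀ ε > 0, ∃ N, ∀ i ≥ N, ∀ j ≥ N,
      core.inner ((x (i+1) - x i) - (x (j+1) - x j)) ((x (i+1) - x i) - (x (j+1) - x j)) < ε^2 := by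
  let _ : NormedAddCommGroup E := core.toNormedAddCommGroup
  let _ : InnerProductSpace ℝ E := InnerProductSpace.ofCore core.toCore
  have hn : ∀ y : E, core.inner y y = ‖y‖^2 := fun y => real_inner_self_eq_norm_sq y
  simp only [hn] at h ⊢
  have := abs_cauchy E x c hc h
  intro ε hε
  obtain ⟨N, hN⟩ := Metric.cauchySeq_iff.1 this ε hε
  refine ⟨N, fun i hi j hj => ?_⟩
  have := hN i hi j hj
  rw [dist_eq_norm] at this
  gcongr

lemma proj_spec {E : Type*} [NormedAddCommGroup E] [InnerProductSpace ℝ E] [CompleteSpace E]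
    {S : Set E} (hne : S.Nonempty) (hcl : IsClosed S) (hconv : Convex ℝ S) (x : E) :
    proj S x ∈ S ∧ ∀ y ∈ S, ⟪x - proj S x, y - proj S x⟫ ≤ 0 := by
  have hex : ∃ y, y ∈ S ∧ ∀ z ∈ S, ‖x - y‖ ≤ ‖x - z‖ := by
    obtain ⟨y, hy, e⟩ := exists_norm_eq_iInf_of_complete_convex hne hcl.isComplete hconv x
    refine ⟨y, hy, fun z hz => ?_⟩
    rw [e]
    exact ciInf_le ⟨0, by rintro _ ⟨i, rfl⟩; exact norm_nonneg _⟩ (⟨z, hz⟩ : S)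
  have hp : proj S x = hex.choose := by
    unfold _root_.proj; rw [dif_pos hex]
  obtain ⟨h1, h2⟩ := hex.choose_spec
  rw [← hp] at h1 h2
  refine ⟨h1, (norm_eq_iInf_iff_real_inner_le_zero hconv h1).1 ?_⟩
  have : Nonempty S := hne.to_subtype
  exact le_antisymm (le_ciInf fun w => h2 w w.2)
    (ciInf_le ⟨0, by rintro _ ⟨i, rfl⟩; exact norm_nonneg _⟩ (⟨_, h1⟩ : S))

lemma polar_facts {E : Type*} [NormedAddCommGroup E] [InnerProductSpace ℝ E] (K : Set E) :
    (polarCone K).Nonempty ∧ IsClosed (polarCone K) ∧ Convex ℝ (polarCone K) := by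
  refine ⟨⟨0, fun y _ => by simp⟩, ?_, ?_⟩
  · have : polarCone K = ⋂ y ∈ K, {w | ⟪w, y⟫ ≤ 0} := by ext; simp [polarCone]
    rw [this]
    exact isClosed_biInter fun y _ => isClosed_le (by fun_prop) continuous_const
  · intro a ha b hb s t hs ht _ y hy
    rw [inner_add_left, inner_smul_left, inner_smul_left]
    have := ha y hy
    have := hb y hy
    simp only [conj_trivial]
    nlinarith

lemma polar_proj {E : Type*} [NormedAddCommGroup E] [InnerProductSpace ℝ E] [CompleteSpace E]
    (K : Set E) (x : E) : proj (polarCone K) x ∈ polarCone K ∧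
      (∀ y ∈ polarCone K, ⟪x - proj (polarCone K) x, y⟫ ≤ 0) ∧
      ⟪x - proj (polarCone K) x, proj (polarCone K) x⟫ = 0 := by
  obtain ⟨h1, h2, h3⟩ := polar_facts K
  obtain ⟨h4, h5⟩ := proj_spec h1 h2 h3 x
  set p := proj (polarCone K) x
  have e0 := h5 0 (fun y _ => by simp)
  have e2 := h5 (2 • p) (fun y hy => by
    have := h4 y hy
    rw [two_smul, inner_add_left]; linarith)
  have hz : ⟪x - p, p⟫ = 0 := by
    simp only [two_smul, add_sub_cancel_right, zero_sub, inner_neg_right] at e0 e2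
    linarith
  refine ⟨h4, fun y hy => ?_, hz⟩
  have := h5 y hy
  rw [inner_sub_right] at this
  linarith

lemma quad_bound (κ h c s t : ℝ) (hκ : κ ≤ 1) (hc : c = (κ - h^2)/2) (hpos : 0 < c) :
    c * (s^2 + t^2) ≤ κ * s^2 + t^2 - 2 * h * (s * t) := by
  have h1 : 0 < 1 - c := by nlinarith [sq_nonneg h]
  have h2 : h^2 ≤ (κ - c) * (1 - c) := by nlinarith [sq_nonneg h, sq_nonneg c]
  have : 0 ≤ (1 - c) * ((κ - c) * s^2 + (1-c) * t^2 - 2 * h * (s*t)) := by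
    nlinarith [sq_nonneg ((1-c)*t - h*s), mul_nonneg (sub_nonneg.2 h2) (sq_nonneg s)]
  have := nonneg_of_mul_nonneg_right this h1
  linarith

section
variable {E F : Type*} [NormedAddCommGroup E] [InnerProductSpace ℝ E] [CompleteSpace E]
  [NormedAddCommGroup F] [InnerProductSpace ℝ F] [CompleteSpace F]

lemma alpha_bound (α γ lam ν : ℝ) (hγ : 1/2 < γ) (hγ1 : γ < 1)
    (hlam : 0 ≤ lam) (hν : 0 ≤ ν) (hα0 : 0 < α)
    (hα : α ≤ (8 - 4/γ) / (Real.sqrt (lam^2 + 16*ν^2) + lam)) :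
    (α * ν)^2 < 1 - α * lam / 2 := by
  have hs0 := Real.sqrt_nonneg (lam^2 + 16*ν^2)
  have hs := Real.sq_sqrt (show 0 ≤ lam^2 + 16*ν^2 by positivity)
  set s := Real.sqrt (lam^2 + 16*ν^2)
  have hden : 0 < s + lam := by
    rcases (add_nonneg hs0 hlam).eq_or_lt with h0 | h0
    · rw [← h0] at hα; simp at hα; linarith
    · exact h0
  rw [le_div_iff₀ hden] at hα
  have h4 : 4 < 4 / γ := by rw [lt_div_iff₀ (by linarith)]; linarith
  have h5 : α * s < 4 - α * lam := by nlinarith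
  have h6 : (α * s)^2 < (4 - α * lam)^2 := by
    have : 0 ≤ α * s := by positivity
    gcongr
  rw [mul_pow, hs] at h6
  nlinarith

lemma step_ineq (α κ c : ℝ) (hα0 : 0 < α) (P : E →L[ℝ] E) (hPsa : IsSelfAdjoint P)
    (hPpsd : ∀ x, 0 ≤ ⟪P x, x⟫) (H : E →L[ℝ] F) (lam ν : ℝ)
    (hlam : ‖P‖ ≤ lam) (hν : ‖H‖ ≤ ν) (hκ : κ = 1 - α * lam / 2)
    (hc : c = (κ - (α * ν)^2)/2) (hpos : 0 < c)
    (a a' : E) (b b' : F)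
    (h1 : 0 ≤ ⟪a - a' - α • (P a + (ContinuousLinearMap.adjoint H) b), a'⟫)
    (h2 : 0 ≤ ⟪b - b' + α • H ((2:ℝ) • a' - a), b'⟫) :
    (‖a'‖^2 + ‖b'‖^2 - 2 * α * ⟪H a', b'⟫) + c * (‖a' - a‖^2 + ‖b' - b‖^2) ≤
      ‖a‖^2 + ‖b‖^2 - 2 * α * ⟪H a, b⟫ := by
  have hlam0 : 0 ≤ lam := (norm_nonneg _).trans hlam
  obtain ⟨e, rfl⟩ : ∃ e, a' = a + e := ⟨a' - a, by simp⟩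
  obtain ⟨f, rfl⟩ : ∃ f, b' = b + f := ⟨b' - b, by simp⟩
  have hPs : ∀ x y, ⟪P x, y⟫ = ⟪x, P y⟫ := by
    intro x y
    have := ContinuousLinearMap.adjoint_inner_left P y x
    rw [hPsa.adjoint_eq] at this
    exact this
  have q1 : α * ⟪H e, f⟫ ≤ α * ν * (‖e‖ * ‖f‖) := by
    have := real_inner_le_norm (H e) f
    have h3 : ‖H e‖ ≤ ν * ‖e‖ := H.le_of_opNorm_le hν e
    have h4 : ‖H e‖ * ‖f‖ ≤ ν * ‖e‖ * ‖f‖ := by gcongr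
    have := mul_le_mul_of_nonneg_left (this.trans h4) hα0.le
    linarith
  have q2 := quad_bound κ (α*ν) c ‖e‖ ‖f‖ (by rw [hκ]; nlinarith [mul_nonneg hα0.le hlam0]) hc hpos
  have q3 : ⟪P e, e⟫ ≤ lam * ‖e‖^2 := by
    have := real_inner_le_norm (P e) e
    have h3 : ‖P e‖ ≤ lam * ‖e‖ := P.le_of_opNorm_le hlam e
    nlinarith [norm_nonneg e]
  have q4 := hPpsd (a + (1/2:ℝ) • e)
  have cc : ⟪P e, a⟫ = ⟪P a, e⟫ := by rw [hPs, real_inner_comm]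
  have q5 : α * ⟪P e, e⟫ ≤ α * (lam * ‖e‖^2) := mul_le_mul_of_nonneg_left q3 hα0.le
  simp only [map_add, map_sub, map_smul, inner_add_left, inner_add_right, inner_sub_left,
    inner_smul_left, inner_smul_right, conj_trivial, ContinuousLinearMap.adjoint_inner_left,
    cc, smul_add, smul_sub] at *
  have q6 := mul_nonneg hα0.le q4
  simp only [add_sub_cancel_left, norm_add_sq_real]
  rw [real_inner_comm (H a) b, real_inner_comm (H e) b] at h1
  simp only [real_inner_self_eq_norm_sq, real_inner_comm a e, real_inner_comm b f] at *
  subst hκ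
  nlinarith

@[reducible] def coreM (α c : ℝ) (H : E →L[ℝ] F) (hpos : 0 < c)
    (hN : ∀ a b, c * (‖a‖^2 + ‖b‖^2) ≤ ‖a‖^2 + ‖b‖^2 - 2 * α * ⟪H a, b⟫) :
    InnerProductSpace.Core ℝ (E × F) where
  inner x y := ⟪x.1, y.1⟫ + ⟪x.2, y.2⟫ - α * ⟪H x.1, y.2⟫ - α * ⟪H y.1, x.2⟫
  conj_inner_symm x y := by
    simp only [conj_trivial]
    rw [real_inner_comm x.1 y.1, real_inner_comm x.2 y.2]; ring
  re_inner_nonneg x := by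
    have := hN x.1 x.2
    have : 0 ≤ c * (‖x.1‖^2 + ‖x.2‖^2) := by positivity
    simp only [real_inner_self_eq_norm_sq, RCLike.re_to_real]
    linarith
  add_left x y z := by
    simp only [Prod.fst_add, Prod.snd_add, map_add, inner_add_left, inner_add_right]; ring
  smul_left x y r := by
    simp only [Prod.smul_fst, Prod.smul_snd, map_smul, inner_smul_left, inner_smul_right,
      conj_trivial]; ring
  definite x hx := by
    have h1 := hN x.1 x.2
    simp only [real_inner_self_eq_norm_sq] at hx
    have h2 : c * (‖x.1‖^2 + ‖x.2‖^2) ≤ 0 := by linarith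
    have h3 : ‖x.1‖^2 + ‖x.2‖^2 ≤ 0 := by
      by_contra! h; nlinarith
    have h4 : ‖x.1‖ = 0 := by nlinarith [sq_nonneg ‖x.1‖, sq_nonneg ‖x.2‖]
    have h5 : ‖x.2‖ = 0 := by nlinarith [sq_nonneg ‖x.1‖, sq_nonneg ‖x.2‖]
    exact Prod.ext (norm_eq_zero.1 h4) (norm_eq_zero.1 h5)

lemma coreM_self (α c : ℝ) (H : E →L[ℝ] F) (hpos : 0 < c)
    (hN : ∀ a b, c * (‖a‖^2 + ‖b‖^2) ≤ ‖a‖^2 + ‖b‖^2 - 2 * α * ⟪H a, b⟫) (x : E × F) :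
    (coreM α c H hpos hN).inner x x = ‖x.1‖^2 + ‖x.2‖^2 - 2 * α * ⟪H x.1, x.2⟫ := by
  have : (coreM α c H hpos hN).inner x x =
    ⟪x.1, x.1⟫ + ⟪x.2, x.2⟫ - α * ⟪H x.1, x.2⟫ - α * ⟪H x.1, x.2⟫ := rfl
  rw [this, real_inner_self_eq_norm_sq, real_inner_self_eq_norm_sq]; ring

lemma z_conv (α : ℝ) (P : E →L[ℝ] E) (hPsa : IsSelfAdjoint P)
    (hPpsd : ∀ x, 0 ≤ ⟪P x, x⟫) (H : E →L[ℝ] F) (lam ν : ℝ)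
    (hlam : ‖P‖ ≤ lam) (hν : ‖H‖ ≤ ν) (hα0 : 0 < α)
    (hα : (α * ν)^2 < 1 - α * lam / 2) (z : ℕ → E) (w : ℕ → F)
    (h1 : ∀ i j, 0 ≤ ⟪(z i - z j) - (z (i+1) - z (j+1)) - α • (P (z i - z j) +
      (ContinuousLinearMap.adjoint H) (w (i+1) - w (j+1))), z (i+1) - z (j+1)⟫)
    (h2 : ∀ i j, 0 ≤ ⟪(w (i+1) - w (j+1)) - (w (i+2) - w (j+2)) +
      α • H ((2:ℝ) • (z (i+1) - z (j+1)) - (z i - z j)), w (i+2) - w (j+2)⟫) :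
    ∃ zbar, Tendsto (fun j => z (j+1) - z j) atTop (𝓝 zbar) := by
  have hlam0 : 0 ≤ lam := (norm_nonneg _).trans hlam
  have hν0 : 0 ≤ ν := (norm_nonneg _).trans hν
  obtain ⟨κ, hκ⟩ : ∃ κ, κ = 1 - α * lam / 2 := ⟨_, rfl⟩
  obtain ⟨c, hc⟩ : ∃ c, c = (κ - (α * ν)^2)/2 := ⟨_, rfl⟩
  have hpos : 0 < c := by rw [hc, hκ]; linarith
  have hκ1 : κ ≤ 1 := by rw [hκ]; nlinarith [mul_nonneg hα0.le hlam0]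
  have q1 : ∀ (a : E) (b : F), |α * ⟪H a, b⟫| ≤ α * ν * (‖a‖ * ‖b‖) := by
    intro a b
    have := abs_real_inner_le_norm (H a) b
    have h3 : ‖H a‖ ≤ ν * ‖a‖ := H.le_of_opNorm_le hν a
    have h4 : ‖H a‖ * ‖b‖ ≤ ν * ‖a‖ * ‖b‖ := by gcongr
    have := mul_le_mul_of_nonneg_left (this.trans h4) hα0.le
    rw [abs_mul, abs_of_pos hα0]
    linarith
  have hN : ∀ (a : E) (b : F), c * (‖a‖^2 + ‖b‖^2) ≤ ‖a‖^2 + ‖b‖^2 - 2 * α * ⟪H a, b⟫ := by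
    intro a b
    have := quad_bound κ (α*ν) c ‖a‖ ‖b‖ hκ1 hc hpos
    have := (abs_le.1 (q1 a b)).2
    nlinarith [sq_nonneg ‖a‖]
  have hN2 : ∀ (a : E) (b : F), ‖a‖^2 + ‖b‖^2 - 2 * α * ⟪H a, b⟫ ≤ 2 * (‖a‖^2 + ‖b‖^2) := by
    intro a b
    have h3 := (abs_le.1 (q1 a b)).1
    have h4 : α * ν ≤ 1 := by nlinarith
    have h5 : α * ν * (‖a‖ * ‖b‖) ≤ 1 * (‖a‖ * ‖b‖) := by gcongr
    nlinarith [sq_nonneg (‖a‖ - ‖b‖)]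
  have key := core_cauchy (E × F) (coreM α c H hpos hN) (fun j => (z j, w (j+1))) (c/2)
    (by positivity) (by
      intro i j
      simp only [coreM_self, Prod.fst_sub, Prod.snd_sub]
      have s1 := step_ineq α κ c hα0 P hPsa hPpsd H lam ν hlam hν hκ hc hpos
        (z i - z j) (z (i+1) - z (j+1)) (w (i+1) - w (j+1)) (w (i+2) - w (j+2)) (h1 i j) (h2 i j)
      have s2 := hN2 (z (i+1) - z i - (z (j+1) - z j)) (w (i+1+1) - w (i+1) - (w (j+1+1) - w (j+1)))
      rw [show z (i+1) - z (j+1) - (z i - z j) = z (i+1) - z i - (z (j+1) - z j) by abel,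
        show w (i+2) - w (j+2) - (w (i+1) - w (j+1)) =
          w (i+1+1) - w (i+1) - (w (j+1+1) - w (j+1)) by
          rw [show i+2 = i+1+1 from rfl, show j+2 = j+1+1 from rfl]; abel] at s1
      have s3 := mul_le_mul_of_nonneg_left s2 (show 0 ≤ c/2 by positivity)
      linarith)
  simp only [coreM_self, Prod.fst_sub, Prod.snd_sub] at key
  apply cauchySeq_tendsto_of_complete
  rw [Metric.cauchySeq_iff]
  intro ε hε
  obtain ⟨N, hNN⟩ := key (√c * ε) (by positivity)
  refine ⟨N, fun i hi j hj => ?_⟩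
  have k1 := hNN i hi j hj
  have k2 := hN (z (i+1) - z i - (z (j+1) - z j)) (w (i+1+1) - w (i+1) - (w (j+1+1) - w (j+1)))
  rw [mul_pow, Real.sq_sqrt hpos.le] at k1
  rw [dist_eq_norm]
  refine lt_of_pow_lt_pow_left₀ 2 hε.le ?_
  have k3 := lt_of_mul_lt_mul_left (k2.trans_lt k1) hpos.le
  nlinarith [sq_nonneg ‖w (i+1+1) - w (i+1) - (w (j+1+1) - w (j+1))‖]

lemma avg_tendsto (x : ℕ → E) (l : E) (h : Tendsto (fun j => x (j+1) - x j) atTop (𝓝 l)) (k : ℕ) :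
    Tendsto (fun j : ℕ => (j:ℝ)⁻¹ • x (j+k)) atTop (𝓝 l) := by
  have hinv : Tendsto (fun j : ℕ => (j:ℝ)⁻¹) atTop (𝓝 0) := tendsto_inv_atTop_nhds_zero_nat
  have h1 := ((tendsto_add_atTop_iff_nat k).2 h).cesaro_smul
  have h2 := h1.add (hinv.smul_const (x k))
  simp only [zero_smul, add_zero] at h2
  refine h2.congr (fun j => ?_)
  rw [← smul_add]
  congr 1
  have := Finset.sum_range_sub (fun i => x (i+k)) j
  simp only [zero_add] at this
  rw [show ∑ i ∈ Finset.range j, (x (i+k+1) - x (i+k)) = x (j+k) - x k by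
    rw [← this]; refine Finset.sum_congr rfl fun i _ => ?_; rw [show i+1+k = i+k+1 by ring]]
  abel

end

/-- if the limit `w̄` of consecutive differences of the dual PIPG iterates
is nonzero, then `⟪w̄, ·⟫ = 0` separates `K` from `{Hz - g | z ∈ D}`, proving primal
infeasibility. -/
theorem stmt6 {n m : ℕ} (α : ℝ)
    (P : EuclideanSpace ℝ (Fin n) →L[ℝ] EuclideanSpace ℝ (Fin n))
    (hPsa : IsSelfAdjoint P) (hPpsd : ∀ x, 0 ≤ ⟪P x, x⟫)
    (q : EuclideanSpace ℝ (Fin n))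
    (H : EuclideanSpace ℝ (Fin n) →L[ℝ] EuclideanSpace ℝ (Fin m))
    (g : EuclideanSpace ℝ (Fin m))
    (D : Set (EuclideanSpace ℝ (Fin n)))
    (hDne : D.Nonempty) (hDcl : IsClosed D) (hDconv : Convex ℝ D)
    (K : Set (EuclideanSpace ℝ (Fin m)))
    (hKne : K.Nonempty) (hKcl : IsClosed K) (hKconv : Convex ℝ K)
    (hKcone : ∀ w ∈ K, ∀ a : ℝ, 0 ≤ a → a • w ∈ K)
    (w v : ℕ → EuclideanSpace ℝ (Fin m))
    (z : ℕ → EuclideanSpace ℝ (Fin n))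
    (hw : ∀ j : ℕ, w (j + 1) = proj (polarCone K) (v j + α • (H (z j) - g)))
    (hz : ∀ j : ℕ, z (j + 1) =
      proj D (z j - α • (P (z j) + q + (ContinuousLinearMap.adjoint H) (w (j + 1)))))
    (hv : ∀ j : ℕ, v (j + 1) = w (j + 1) + α • H (z (j + 1) - z j))
    (γ lam ν : ℝ) (hγ : 1/2 < γ) (hγ1 : γ < 1)
    (hlam : ‖P‖ ≤ lam) (hν : ‖H‖ ≤ ν) (hα0 : 0 < α)
    (hα : α ≤ (8 - 4/γ) / (Real.sqrt (lam^2 + 16*ν^2) + lam))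
    (wbar : EuclideanSpace ℝ (Fin m))
    (hwlim : Tendsto (fun j : ℕ => w (j + 1) - w j) atTop (𝓝 wbar))
    (hwpos : 0 < ‖wbar‖) :
    0 < sInf {r : ℝ | ∃ zz ∈ D, r = ⟪H zz - g, wbar⟫} ∧
    sSup {r : ℝ | ∃ y ∈ K, r = ⟪y, wbar⟫} = 0 ∧
    ¬ ∃ zz ∈ D, H zz - g ∈ K := by
  
  have hlam0 : 0 ≤ lam := (norm_nonneg _).trans hlam
  have hν0 : 0 ≤ ν := (norm_nonneg _).trans hν
  have hαb := alpha_bound α γ lam ν hγ hγ1 hlam0 hν0 hα0 hα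
  have hPs : ∀ x y, ⟪P x, y⟫ = ⟪x, P y⟫ := by
    intro x y
    have := ContinuousLinearMap.adjoint_inner_left P y x
    rw [hPsa.adjoint_eq] at this
    exact this
  -- variational facts
  have hwK : ∀ j, w (j+1) ∈ polarCone K := fun j => by
    rw [hw]; exact (polar_proj K _).1
  have hzD : ∀ j, z (j+1) ∈ D := fun j => by
    rw [hz]; exact (proj_spec hDne hDcl hDconv _).1
  have hA0 : ∀ j, w (j+2) = _root_.proj (polarCone K)
      (w (j+1) + α • (H ((2:ℝ) • z (j+1) - z j) - g)) := by
    intro j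
    rw [show j + 2 = j+1+1 from rfl, hw (j+1), hv j]
    congr 1
    simp only [map_sub, map_smul]
    module
  have hA : ∀ j, ∀ y ∈ polarCone K,
      ⟪w (j+1) + α • (H ((2:ℝ) • z (j+1) - z j) - g) - w (j+2), y⟫ ≤ 0 := by
    intro j
    rw [hA0 j]; exact (polar_proj K _).2.1
  have hAe : ∀ j, ⟪w (j+1) + α • (H ((2:ℝ) • z (j+1) - z j) - g) - w (j+2), w (j+2)⟫ = 0 := by
    intro j
    rw [hA0 j]; exact (polar_proj K _).2.2
  have hB : ∀ j, ∀ y ∈ D, ⟪z j - α • (P (z j) + q + (ContinuousLinearMap.adjoint H) (w (j + 1)))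
      - z (j+1), y - z (j+1)⟫ ≤ 0 := by
    intro j
    rw [hz j]; exact (proj_spec hDne hDcl hDconv _).2
  -- convergence of the primal differences
  obtain ⟨zbar, hzlim⟩ := z_conv α P hPsa hPpsd H lam ν hlam hν hα0 hαb z w (by
    intro i j
    have b1 := hB i _ (hzD j)
    have b2 := hB j _ (hzD i)
    rw [← neg_sub (z (i+1)) (z (j+1)), inner_neg_right] at b1
    have e : (z i - z j) - (z (i+1) - z (j+1)) - α • (P (z i - z j) +
      (ContinuousLinearMap.adjoint H) (w (i+1) - w (j+1))) =
      (z i - α • (P (z i) + q + (ContinuousLinearMap.adjoint H) (w (i + 1))) - z (i+1)) -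
      (z j - α • (P (z j) + q + (ContinuousLinearMap.adjoint H) (w (j + 1))) - z (j+1)) := by
      simp only [map_sub]; module
    rw [e, inner_sub_left]
    linarith) (by
    intro i j
    have b1 := hA i _ (hwK (j+1))
    have b2 := hA j _ (hwK (i+1))
    have b3 := hAe i
    have b4 := hAe j
    have e : (w (i+1) - w (j+1)) - (w (i+2) - w (j+2)) +
      α • H ((2:ℝ) • (z (i+1) - z (j+1)) - (z i - z j)) =
      (w (i+1) + α • (H ((2:ℝ) • z (i+1) - z i) - g) - w (i+2)) -
      (w (j+1) + α • (H ((2:ℝ) • z (j+1) - z j) - g) - w (j+2)) := by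
      simp only [map_sub, map_smul]; module
    rw [e, inner_sub_left, inner_sub_right, inner_sub_right]
    rw [show j + 2 = j+1+1 from rfl, show i+2 = i+1+1 from rfl] at *
    linarith)
  have hinv : Tendsto (fun j : ℕ => (j:ℝ)⁻¹) atTop (𝓝 0) := tendsto_inv_atTop_nhds_zero_nat
  have hinv0 : ∀ j : ℕ, 0 ≤ (j:ℝ)⁻¹ := fun j => by positivity
  have zz0 := avg_tendsto z zbar hzlim 0
  have zz1 := avg_tendsto z zbar hzlim 1
  have ww1 := avg_tendsto w wbar hwlim 1
  have ww2 := avg_tendsto w wbar hwlim 2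
  have hwlim1 := (tendsto_add_atTop_iff_nat 1).2 hwlim
  simp only [add_zero] at zz0
  have hwbK : wbar ∈ polarCone K := by
    refine (polar_facts K).2.1.mem_of_tendsto ww1 (Eventually.of_forall fun j y hy => ?_)
    rw [inner_smul_left, conj_trivial]
    exact mul_nonpos_of_nonneg_of_nonpos (hinv0 j) (hwK j y hy)
  have Hc : ∀ {u : ℕ → EuclideanSpace ℝ (Fin n)} {l}, Tendsto u atTop (𝓝 l) →
      Tendsto (fun j => H (u j)) atTop (𝓝 (H l)) := fun h => (H.continuous.tendsto _).comp h
  have Pc : ∀ {u : ℕ → EuclideanSpace ℝ (Fin n)} {l}, Tendsto u atTop (𝓝 l) →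
      Tendsto (fun j => P (u j)) atTop (𝓝 (P l)) := fun h => (P.continuous.tendsto _).comp h
  -- `H zbar` lies in the bipolar of `K`
  have hHz : ∀ y ∈ polarCone K, ⟪H zbar, y⟫ ≤ 0 := by
    intro y hy
    have t1 : Tendsto (fun j : ℕ => (j:ℝ)⁻¹ • (w (j+1) + α • (H ((2:ℝ) • z (j+1) - z j) - g) - w (j+2)))
        atTop (𝓝 (α • H zbar)) := by
      have := ((hinv.smul (hwlim1.neg)).add ((Hc zz1).const_smul α)).add
        ((hinv.smul ((Hc hzlim).sub_const g)).const_smul α)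
      simp only [zero_smul, smul_zero, zero_add, add_zero] at this
      refine this.congr fun j => ?_
      simp only [map_sub, map_smul]
      rw [show j + 1 + 1 = j + 2 from rfl]
      module
    have t2 := t1.inner (𝕜 := ℝ) (tendsto_const_nhds (x := y))
    have t3 := le_of_tendsto' t2 (b := 0) (fun j => by
      rw [inner_smul_left, conj_trivial]
      exact mul_nonpos_of_nonneg_of_nonpos (hinv0 j) (hA j y hy))
    rw [inner_smul_left, conj_trivial] at t3
    by_contra! h
    nlinarith
  -- the dual complementarity
  have hcomp : ∀ j, α * ⟪w (j+2), H (z (j+1))⟫ =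
      ⟪w (j+2), (w (j+2) - w (j+1)) - α • H (z (j+1) - z j) + α • g⟫ := by
    intro j
    have := hAe j
    rw [real_inner_comm] at this
    simp only [map_sub, map_smul, inner_sub_right, inner_add_right, inner_smul_right] at this ⊢
    linarith
  have hcl : Tendsto (fun j : ℕ => (j:ℝ)⁻¹ * (α * ⟪w (j+2), H (z (j+1))⟫)) atTop
      (𝓝 ⟪wbar, wbar - α • H zbar + α • g⟫) := by
    have := ww2.inner (𝕜 := ℝ) ((hwlim1.sub ((Hc hzlim).const_smul α)).add_const (α • g))
    refine this.congr fun j => ?_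
    rw [hcomp, inner_smul_left, conj_trivial]
  have horth : ⟪wbar, H zbar⟫ = 0 := by
    have t1 := hinv.mul hcl
    rw [zero_mul] at t1
    have t2 := (ww2.inner (𝕜 := ℝ) (Hc zz1)).const_mul α
    have t3 := tendsto_nhds_unique t2 (t1.congr fun j => by
      simp only [map_smul, inner_smul_left, inner_smul_right, conj_trivial]; ring)
    rcases mul_eq_zero.1 t3 with h | h
    · exact absurd h hα0.ne'
    · exact h
  have hcl2 : Tendsto (fun j : ℕ => (j:ℝ)⁻¹ * (α * ⟪w (j+1), H (z (j+1))⟫)) atTop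
      (𝓝 (‖wbar‖^2 + α * ⟪wbar, g⟫)) := by
    have t1 := hcl.sub ((hwlim1.inner (𝕜 := ℝ) (Hc zz1)).const_mul α)
    rw [horth] at t1
    have e : ⟪wbar, wbar - α • H zbar + α • g⟫ - α * 0 = ‖wbar‖^2 + α * ⟪wbar, g⟫ := by
      simp only [inner_add_right, inner_sub_right, inner_smul_right, horth,
        real_inner_self_eq_norm_sq]; ring
    rw [e] at t1
    refine t1.congr fun j => ?_
    simp only [map_smul, inner_smul_right, inner_sub_left]
    rw [show j+1+1 = j+2 from rfl]
    ring
  -- expanded primal inequality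
  have hB2 : ∀ y ∈ D, ∀ j, -⟪z (j+1) - z j, y⟫ + ⟪z (j+1) - z j, z (j+1)⟫ - α * ⟪P (z j), y⟫
      - α * ⟪P (z (j+1) - z j), z (j+1)⟫ + α * ⟪P (z (j+1)), z (j+1)⟫
      - α * ⟪q, y⟫ + α * ⟪q, z (j+1)⟫ - α * ⟪w (j+1), H y⟫ + α * ⟪w (j+1), H (z (j+1))⟫ ≤ 0 := by
    intro y hy j
    have := hB j y hy
    simp only [map_sub, inner_sub_left, inner_sub_right, inner_add_left, inner_smul_left,
      conj_trivial, ContinuousLinearMap.adjoint_inner_left] at this ⊢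
    linarith
  have hlim1 : ∀ y, Tendsto (fun j : ℕ => (j:ℝ)⁻¹ * (-⟪z (j+1) - z j, y⟫
      + ⟪z (j+1) - z j, z (j+1)⟫ - α * ⟪P (z j), y⟫
      - α * ⟪P (z (j+1) - z j), z (j+1)⟫ 
      - α * ⟪q, y⟫ + α * ⟪q, z (j+1)⟫ - α * ⟪w (j+1), H y⟫ + α * ⟪w (j+1), H (z (j+1))⟫)) atTop
      (𝓝 (‖zbar‖^2 - α * ⟪P zbar, y⟫ - α * ⟪P zbar, zbar⟫ + α * ⟪q, zbar⟫ - α * ⟪wbar, H y⟫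
        + (‖wbar‖^2 + α * ⟪wbar, g⟫))) := by
    intro y
    have cy := tendsto_const_nhds (x := y) (f := (atTop : Filter ℕ))
    have cq := tendsto_const_nhds (x := q) (f := (atTop : Filter ℕ))
    have cHy := tendsto_const_nhds (x := H y) (f := (atTop : Filter ℕ))
    have t := (((((((hinv.mul (hzlim.inner (𝕜 := ℝ) cy)).neg.add (hzlim.inner (𝕜 := ℝ) zz1)).sub
      (((Pc zz0).inner (𝕜 := ℝ) cy).const_mul α)).sub (((Pc hzlim).inner (𝕜 := ℝ) zz1).const_mul α)).sub
      (hinv.mul_const (α * ⟪q, y⟫))).add ((cq.inner (𝕜 := ℝ) zz1).const_mul α)).sub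
      ((ww1.inner (𝕜 := ℝ) cHy).const_mul α)).add hcl2
    simp only [zero_mul, neg_zero, zero_add, sub_zero, real_inner_self_eq_norm_sq] at t
    refine t.congr fun j => ?_
    simp only [map_smul, inner_smul_left, inner_smul_right, conj_trivial]
    ring
  obtain ⟨y0, hy0⟩ := hDne
  have hPz0 : ⟪P zbar, zbar⟫ ≤ 0 := by
    have t1 := (hinv.mul (hlim1 y0)).add (((Pc zz1).inner (𝕜 := ℝ) zz1).const_mul α)
    rw [zero_mul, zero_add] at t1
    have := le_of_tendsto' t1 (b := 0) (fun j => by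
      have e := mul_nonpos_of_nonneg_of_nonpos (mul_nonneg (hinv0 j) (hinv0 j)) (hB2 y0 hy0 j)
      simp only [map_smul, inner_smul_left, inner_smul_right, conj_trivial]
      linarith)
    by_contra! h
    nlinarith
  have hPz : P zbar = 0 := by
    have h0 : ⟪P zbar, zbar⟫ = 0 := le_antisymm hPz0 (hPpsd _)
    by_contra hne
    have hp : 0 < ‖P zbar‖^2 := by have := norm_pos_iff.2 hne; positivity
    set C := ⟪P (P zbar), P zbar⟫ with hC
    have hC0 : 0 ≤ C := hPpsd _
    have key : ∀ s : ℝ, 0 ≤ - (2 * s * ‖P zbar‖^2) + s^2 * C := by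
      intro s
      have := hPpsd (zbar - s • P zbar)
      have e : ⟪P (P zbar), zbar⟫ = ‖P zbar‖^2 := by
        rw [hPs, real_inner_self_eq_norm_sq]
      simp only [map_sub, map_smul, inner_sub_left, inner_sub_right, inner_smul_left,
        inner_smul_right, conj_trivial, e, h0, real_inner_self_eq_norm_sq] at this
      linarith
    have k := key (‖P zbar‖^2 / (C + 1))
    have e : -(2 * (‖P zbar‖^2 / (C + 1)) * ‖P zbar‖^2) + (‖P zbar‖^2 / (C + 1))^2 * C
      = - ((‖P zbar‖^2)^2 * (C + 2) / (C+1)^2) := by field_simp; ring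
    rw [e] at k
    have : 0 < (‖P zbar‖^2)^2 * (C + 2) / (C+1)^2 := by positivity
    linarith
  -- `zbar` is a recession direction of `D`
  have hrec : ∀ y ∈ D, y + zbar ∈ D := by
    intro y hy
    have t1 : Tendsto (fun j : ℕ => (1 - (j:ℝ)⁻¹) • y + (j:ℝ)⁻¹ • z (j+1)) atTop (𝓝 (y + zbar)) := by
      have := ((hinv.const_sub 1).smul_const y).add zz1
      simpa using this
    refine hDcl.mem_of_tendsto t1 ?_
    filter_upwards [eventually_ge_atTop 1] with j hj
    have hj1 : (j:ℝ)⁻¹ ≤ 1 := inv_le_one_of_one_le₀ (by exact_mod_cast hj)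
    exact hDconv hy (hzD j) (by linarith) (hinv0 j) (by ring)
  have hqz : 0 ≤ ‖zbar‖^2 + α * ⟪q, zbar⟫ := by
    have t1 := (hzlim.inner (𝕜 := ℝ) (tendsto_const_nhds (x := zbar))).add_const (α * ⟪q, zbar⟫)
    rw [real_inner_self_eq_norm_sq] at t1
    refine ge_of_tendsto' t1 (fun j => ?_)
    have e1 := hB j _ (hrec _ (hzD j))
    have e2 := hHz _ (hwK j)
    have e3 : ⟪P (z j), zbar⟫ = 0 := by rw [hPs, hPz, inner_zero_right]
    rw [real_inner_comm] at e2
    simp only [add_sub_cancel_left, inner_sub_left, inner_add_left, inner_smul_left,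
      conj_trivial, ContinuousLinearMap.adjoint_inner_left, e3] at e1 ⊢
    nlinarith
  have hmain : ∀ y ∈ D, ‖wbar‖^2 / α ≤ ⟪H y - g, wbar⟫ := by
    intro y hy
    have := le_of_tendsto' (hlim1 y) (b := 0) (fun j => by
      have e := mul_nonpos_of_nonneg_of_nonpos (hinv0 j) (hB2 y hy j)
      have e2 := mul_nonneg (hinv0 j) (mul_nonneg hα0.le (hPpsd (z (j+1))))
      linarith)
    rw [hPz, inner_zero_left, inner_zero_left] at this
    rw [div_le_iff₀ hα0, real_inner_comm, inner_sub_right]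
    nlinarith
  have hpos : 0 < ‖wbar‖^2 / α := by positivity
  refine ⟨?_, ?_, ?_⟩
  · refine hpos.trans_le (le_csInf ⟨_, y0, hy0, rfl⟩ ?_)
    rintro _ ⟨y, hy, rfl⟩
    exact hmain y hy
  · obtain ⟨k, hk⟩ := hKne
    have h0 : (0 : EuclideanSpace ℝ (Fin m)) ∈ K := by simpa using hKcone k hk 0 le_rfl
    refine IsGreatest.csSup_eq ⟨⟨0, h0, by simp⟩, ?_⟩
    rintro _ ⟨y, hy, rfl⟩
    rw [real_inner_comm]
    exact hwbK y hy
  · rintro ⟨y, hy, hyK⟩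
    have h1 := hmain y hy
    have h2 := hwbK _ hyK
    rw [real_inner_comm] at h2
    linarith
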